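/- Let each f_i : R^d → R be differentiable, f = (1/n) Σ_{i=1}^n f_i, and let S be a proper sampling over [n] with probability vector p. Fix points x, x' ∈ R^d and a vector u ∈ R^d, and define the SARAH update u' := Σ_{i∈S} (∇f_i(x') − ∇f_i(x))/(n p_i) + u. Then the following exact identity holds: E‖∇f(x') − u'‖² = ‖∇f(x) − u‖² − ‖∇f(x') − ∇f(x)‖² + E‖u' − u‖², where the expectation is over the random set S. -/

import Mathlib

open scoped BigOperators

/-!
Let `Δ` be the importance-weighted estimator of `∇F x' - ∇F x`, so that `u' = Δ + u`, and put
`a = ∇F x' - u`. Since `Δ` is unbiased, expanding the square gives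
`E‖a - Δ‖² = ‖a‖² - 2⟪a, E Δ⟫ + E‖Δ‖² = ‖a - E Δ‖² - ‖E Δ‖² + E‖Δ‖²`,
where `a - Δ = ∇F x' - u'`, `a - E Δ = ∇F x - u` and `Δ = u' - u`.
-/

open scoped ComplexConjugate Gradient

section Sampling

variable {ι R M : Type*} [Fintype ι] [DecidableEq ι]

/-- The probability `p i = Prob(i ∈ S)` that `i` belongs to a random set `S`. The law of `S`, a
sampling, is encoded by its mass function `w` on `Finset ι`. -/
def inclusionProb [AddCommMonoid R] (w : Finset ι → R) (i : ι) : R :=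
  ∑ S with i ∈ S, w S

theorem sum_smul_sum_eq_sum_inclusionProb_smul [Semiring R] [AddCommMonoid M] [Module R M]
    (w : Finset ι → R) (v : ι → M) :
    ∑ S, w S • ∑ i ∈ S, v i = ∑ i, inclusionProb w i • v i := by
  simp only [inclusionProb, Finset.smul_sum, Finset.sum_smul]
  exact Finset.sum_comm' (by simp)

variable {K V : Type*} [DivisionRing K] [AddCommMonoid V] [Module K V]

/-- The importance-weighted estimator `∑ i ∈ S, v i / (n p i)` of the average of the `n` vectors
`v i` from the sampled set `S`, where `p` is `inclusionProb w`. An index with `p i = 0`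
contributes `0`. -/
def importanceEstimator (w : Finset ι → K) (v : ι → V) (S : Finset ι) : V :=
  ∑ i ∈ S, (Fintype.card ι * inclusionProb w i)⁻¹ • v i

theorem sum_smul_importanceEstimator {w : Finset ι → K} (hproper : ∀ i, inclusionProb w i ≠ 0)
    (v : ι → V) :
    ∑ S, w S • importanceEstimator w v S = (Fintype.card ι : K)⁻¹ • ∑ i, v i := by
  simp only [importanceEstimator]
  rw [sum_smul_sum_eq_sum_inclusionProb_smul, Finset.smul_sum]
  refine Finset.sum_congr rfl fun i _ => ?_
  rw [smul_smul, mul_inv_rev, mul_inv_cancel_left₀ (hproper i)]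

end Sampling

section Gradient

variable {𝕜 E : Type*} [RCLike 𝕜] [NormedAddCommGroup E] [InnerProductSpace 𝕜 E] [CompleteSpace E]

theorem hasGradientAt_sum {ι : Type*} {s : Finset ι} {f : ι → E → 𝕜} {g : ι → E} {x : E}
    (h : ∀ i ∈ s, HasGradientAt (f i) (g i) x) :
    HasGradientAt (fun y => ∑ i ∈ s, f i y) (∑ i ∈ s, g i) x := by
  simpa only [hasGradientAt_iff_hasFDerivAt, map_sum] using
    HasFDerivAt.fun_sum fun i hi => (h i hi).hasFDerivAt

theorem hasGradientAt_const_mul {f : E → 𝕜} {g x : E} (c : 𝕜) (h : HasGradientAt f g x) :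
    HasGradientAt (fun y => c * f y) (conj c • g) x := by
  simpa only [hasGradientAt_iff_hasFDerivAt, map_smulₛₗ, RCLike.conj_conj] using
    h.hasFDerivAt.const_mul c

theorem gradient_average {ι : Type*} [Fintype ι] {f : ι → E → 𝕜} {x : E}
    (hf : ∀ i, DifferentiableAt 𝕜 (f i) x) :
    ∇ (fun y => (Fintype.card ι : 𝕜)⁻¹ * ∑ i, f i y) x
      = (Fintype.card ι : 𝕜)⁻¹ • ∑ i, ∇ (f i) x := by
  simpa only [map_inv₀, map_natCast] using
    (hasGradientAt_const_mul (Fintype.card ι : 𝕜)⁻¹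
      (hasGradientAt_sum fun i _ => (hf i).hasGradientAt)).gradient

end Gradient

theorem sum_mul_norm_sub_sq {ι E : Type*} [SeminormedAddCommGroup E] [InnerProductSpace ℝ E]
    {s : Finset ι} {w : ι → ℝ} {X : ι → E} {m : E}
    (hw : ∑ j ∈ s, w j = 1) (hm : ∑ j ∈ s, w j • X j = m) (a : E) :
    ∑ j ∈ s, w j * ‖a - X j‖ ^ 2 = ‖a - m‖ ^ 2 - ‖m‖ ^ 2 + ∑ j ∈ s, w j * ‖X j‖ ^ 2 := by
  have hinner : ∑ j ∈ s, w j * inner ℝ a (X j) = inner ℝ a m := by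
    simp only [← hm, inner_sum, real_inner_smul_right]
  calc ∑ j ∈ s, w j * ‖a - X j‖ ^ 2
      = ∑ j ∈ s, (w j * ‖a‖ ^ 2 - 2 * (w j * inner ℝ a (X j)) + w j * ‖X j‖ ^ 2) := by
        refine Finset.sum_congr rfl fun j _ => ?_
        rw [norm_sub_sq_real]
        ring
    _ = ‖a‖ ^ 2 - 2 * inner ℝ a m + ∑ j ∈ s, w j * ‖X j‖ ^ 2 := by
        rw [Finset.sum_add_distrib, Finset.sum_sub_distrib, ← Finset.sum_mul, ← Finset.mul_sum,
          hw, hinner, one_mul]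
    _ = ‖a - m‖ ^ 2 - ‖m‖ ^ 2 + ∑ j ∈ s, w j * ‖X j‖ ^ 2 := by
        rw [norm_sub_sq_real a m]
        ring

theorem sarah_update_exact_identity_general {ι E : Type*} [Fintype ι] [DecidableEq ι]
    [NormedAddCommGroup E] [InnerProductSpace ℝ E] [CompleteSpace E] (f : ι → E → ℝ)
    (F : E → ℝ) (hF : F = fun y => (Fintype.card ι : ℝ)⁻¹ * ∑ i, f i y)
    (w : Finset ι → ℝ) (hw : ∑ S, w S = 1) (hproper : ∀ i, inclusionProb w i ≠ 0)
    (x x' u : E) (hx : ∀ i, DifferentiableAt ℝ (f i) x) (hx' : ∀ i, DifferentiableAt ℝ (f i) x') :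
    ∑ S, w S * ‖∇ F x' - (importanceEstimator w (fun i => ∇ (f i) x' - ∇ (f i) x) S + u)‖ ^ 2
      = ‖∇ F x - u‖ ^ 2 - ‖∇ F x' - ∇ F x‖ ^ 2 +
        ∑ S, w S * ‖(importanceEstimator w (fun i => ∇ (f i) x' - ∇ (f i) x) S + u) - u‖ ^ 2 := by
  have hunbiased : ∑ S, w S • importanceEstimator w (fun i => ∇ (f i) x' - ∇ (f i) x) S
      = ∇ F x' - ∇ F x := by
    rw [sum_smul_importanceEstimator hproper, hF, gradient_average hx, gradient_average hx',
      Finset.sum_sub_distrib, smul_sub]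
  simpa only [sub_sub_sub_cancel_left, add_sub_cancel_right, sub_add_eq_sub_sub_swap] using
    sum_mul_norm_sub_sq hw hunbiased (∇ F x' - u)

/-- Exact recursion identity for the SARAH estimator under arbitrary proper
sampling: `E‖∇f(x') - u'‖² = ‖∇f(x) - u‖² - ‖∇f(x') - ∇f(x)‖² + E‖u' - u‖²`. -/
theorem sarah_update_exact_identity {n d : ℕ}
    (f : Fin n → EuclideanSpace ℝ (Fin d) → ℝ)
    (hdiff : ∀ i, Differentiable ℝ (f i))
    (F : EuclideanSpace ℝ (Fin d) → ℝ)
    (hF : F = fun y => (n : ℝ)⁻¹ * ∑ i, f i y)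
    (w : Finset (Fin n) → ℝ) (hw0 : ∀ S, 0 ≤ w S) (hw1 : ∑ S, w S = 1)
    (p : Fin n → ℝ)
    (hp : ∀ i, p i = ∑ S ∈ Finset.univ.filter (fun S : Finset (Fin n) => i ∈ S), w S)
    (hproper : ∀ i, 0 < p i)
    (x x' u : EuclideanSpace ℝ (Fin d)) :
    ∑ S : Finset (Fin n), w S *
        ‖gradient F x' -
          ((∑ i ∈ S, ((n : ℝ) * p i)⁻¹ • (gradient (f i) x' - gradient (f i) x)) + u)‖ ^ 2
      = ‖gradient F x - u‖ ^ 2 - ‖gradient F x' - gradient F x‖ ^ 2 +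
        ∑ S : Finset (Fin n), w S *
          ‖((∑ i ∈ S, ((n : ℝ) * p i)⁻¹ • (gradient (f i) x' - gradient (f i) x)) + u)
            - u‖ ^ 2 := by
  obtain rfl : p = inclusionProb w := funext hp
  simpa only [importanceEstimator, Fintype.card_fin] using
    sarah_update_exact_identity_general f F (by simpa only [Fintype.card_fin] using hF) w hw1
      (fun i => (hproper i).ne') x x' u (fun i => hdiff i x) (fun i => hdiff i x')
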